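/- Let q_1,…,q_n be terms over σ, where q_i is an R_i-term for a σ-symbol R_i. Define the σ-structure D(q_1,…,q_n) as follows: with 𝒯 the set of all subterms of the q_i's, 𝒯_V its V-terms and 𝒯_R its R-terms for each σ-symbol R, the domain is all tuples v ∈ {true,false}^{𝒯_V} with v_vertex = true, and (v^1,…,v^k) ∈ R^{D(q_1,…,q_n)} iff (D1) for all t ∈ 𝒯_R and all i with pr_i(t) ∈ 𝒯_V, &_t(v^1,…,v^k) implies v^i_{pr_i(t)}, and (D2') &_{q_j}(v^1,…,v^k) = false for every j with R_j = R. Then for every σ-structure A, exactly one of the following holds: (a) T(q_i) → A for some i ∈ {1,…,n}; (b) A → D(q_1,…,q_n). -/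

import Mathlib

/-!
Attach to each vertex `a` of a structure the set of V-subterms `t` of the `q_i` that hold at `a`,
meaning that `T(t)` maps to the structure with its root sent to `a`. The tree of `edge_R(ts)` maps
to a structure exactly when some `R`-edge `x` there has `ts j` holding at `x j` for all `j`; so, if
no `T(q_i)` maps to `A`, these sets satisfy (D1) and (D2') along every edge of `A` and define a
homomorphism to `D`. Conversely, (D1) forces the entry at `t` of an element of `D` to be `true`
whenever `t` holds there, and (D2') then excludes a homomorphism from any `T(q_i)` to `D`.
-/

/-- A relational signature: a type of relation symbols, each with a positive arity. -/
structure Signature : Type 1 where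
  symb : Type
  ar : symb → ℕ
  ar_pos : ∀ R, 0 < ar R

/-- A relational structure over the signature `σ`. -/
structure Struct (σ : Signature) : Type 1 where
  dom : Type
  rel : ∀ R : σ.symb, Set (Fin (σ.ar R) → dom)

variable {σ τ υ : Signature}

/-- `f` is a homomorphism of `σ`-structures from `A` to `B`. -/
def IsHom (A B : Struct σ) (f : A.dom → B.dom) : Prop :=
  ∀ R : σ.symb, ∀ x ∈ A.rel R, (fun i => f (x i)) ∈ B.rel R

/-- `A → B`: there exists a homomorphism from `A` to `B`. -/
def HomEx (A B : Struct σ) : Prop := ∃ f, IsHom A B f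

/-- Terms over `σ` whose denotation is a tree rooted in a vertex: `vertex` is a V-term, and
`pr R i ts` denotes the V-term `pr_i(edge_R(ts))`.  (An R-term `edge_R(t_1, …, t_k)` is
represented by the symbol `R` together with the tuple `ts` of V-terms.) -/
inductive VTerm (σ : Signature) : Type
  | vertex : VTerm σ
  | pr (R : σ.symb) (i : Fin (σ.ar R)) (ts : Fin (σ.ar R) → VTerm σ) : VTerm σ

/-- The domain of the tree denoted by a V-term. -/
def VTerm.domType : VTerm σ → Type
  | .vertex => PUnit
  | .pr R _ ts => (i : Fin (σ.ar R)) × (ts i).domType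

/-- The root of the tree denoted by a V-term. -/
def VTerm.root : (t : VTerm σ) → t.domType
  | .vertex => PUnit.unit
  | .pr _ i ts => ⟨i, (ts i).root⟩

/-- The domain of the tree denoted by the R-term `edge_R(ts)`: the disjoint union of the
domains of the subtrees. -/
def edgeDom (R : σ.symb) (ts : Fin (σ.ar R) → VTerm σ) : Type :=
  (i : Fin (σ.ar R)) × (ts i).domType

/-- The root edge of the tree denoted by the R-term `edge_R(ts)`. -/
def edgeRoot (R : σ.symb) (ts : Fin (σ.ar R) → VTerm σ) : Fin (σ.ar R) → edgeDom R ts :=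
  fun i => ⟨i, (ts i).root⟩

/-- The relations of the tree denoted by a V-term: the relations of the disjoint subtrees,
together with the root edge. -/
def VTerm.rel : (t : VTerm σ) → ∀ S : σ.symb, Set (Fin (σ.ar S) → t.domType)
  | .vertex, _ => ∅
  | .pr R _ ts, S =>
      {x | ∃ i : Fin (σ.ar R), ∃ y ∈ (ts i).rel S, x = fun j => ⟨i, y j⟩} ∪
      {x | ∃ h : R = S, x = fun j => edgeRoot R ts (Fin.cast (congrArg σ.ar h.symm) j)}

/-- The tree `T(t)` denoted by a V-term `t`. -/
def VTerm.tree (t : VTerm σ) : Struct σ := ⟨t.domType, t.rel⟩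

/-- The tree `T(t)` denoted by the R-term `t = edge_R(ts)`. -/
def ETerm.tree (R : σ.symb) (ts : Fin (σ.ar R) → VTerm σ) : Struct σ where
  dom := edgeDom R ts
  rel S :=
    {x | ∃ i : Fin (σ.ar R), ∃ y ∈ (ts i).rel S, x = fun j => ⟨i, y j⟩} ∪
    {x | ∃ h : R = S, x = fun j => edgeRoot R ts (Fin.cast (congrArg σ.ar h.symm) j)}

/-- The V-subterms of a V-term. -/
def VTerm.vsub : VTerm σ → Set (VTerm σ)
  | .vertex => {.vertex}
  | .pr R i ts => insert (.pr R i ts) (⋃ j, (ts j).vsub)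

/-- The S-subterms of a V-term, for each `σ`-symbol `S` (an S-term `edge_S(us)` being
represented by the tuple `us`). -/
def VTerm.esub : VTerm σ → ∀ S : σ.symb, Set (Fin (σ.ar S) → VTerm σ)
  | .vertex, _ => ∅
  | .pr R _ ts, S =>
      {us | ∃ h : R = S, us = fun j => ts (Fin.cast (congrArg σ.ar h.symm) j)} ∪
      {us | ∃ j, us ∈ (ts j).esub S}

/-- A term is either a V-term or an R-term `edge_R(ts)` for some symbol `R`. -/
def Term (σ : Signature) : Type := VTerm σ ⊕ (Σ S : σ.symb, Fin (σ.ar S) → VTerm σ)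

/-- The tree denoted by a term. -/
def Term.tree : Term σ → Struct σ
  | .inl t => t.tree
  | .inr ⟨S, ts⟩ => ETerm.tree S ts

/-- The V-subterms of a term. -/
def Term.vsub : Term σ → Set (VTerm σ)
  | .inl t => t.vsub
  | .inr ⟨_, ts⟩ => ⋃ j, (ts j).vsub

/-- The S-subterms of a term. -/
def Term.esub : Term σ → ∀ S : σ.symb, Set (Fin (σ.ar S) → VTerm σ)
  | .inl t => t.esub
  | .inr ⟨R, ts⟩ => fun S =>
      {us | ∃ h : R = S, us = fun j => ts (Fin.cast (congrArg σ.ar h.symm) j)} ∪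
      {us | ∃ j, us ∈ (ts j).esub S}

/-- Tuples of booleans indexed by the V-terms in `TV` whose entry at `vertex` is `true`. -/
def BDom (TV : Set (VTerm σ)) : Type :=
  {v : {t : VTerm σ // t ∈ TV} → Bool // ∀ h : VTerm.vertex ∈ TV, v ⟨.vertex, h⟩ = true}

open Classical in
/-- The entry of `v` at the V-term `t` (by convention `false` if `t ∉ TV`). -/
noncomputable def bext (TV : Set (VTerm σ)) (v : BDom TV) (t : VTerm σ) : Bool :=
  if h : t ∈ TV then v.1 ⟨t, h⟩ else false

/-- `&ₜ(vs) = (vs 1)_{us 1} ∧ ⋯ ∧ (vs k)_{us k}` for the R-term `t = edge_R(us)`. -/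
def andT (TV : Set (VTerm σ)) {R : σ.symb} (us : Fin (σ.ar R) → VTerm σ)
    (vs : Fin (σ.ar R) → BDom TV) : Prop :=
  ∀ j, bext TV (vs j) (us j) = true


/-- The dual `D(q_1, …, q_n)` of the terms `q_i = edge_{R_i}(qs i)`. -/
noncomputable def DualN {σ : Signature} (n : ℕ) (Rs : Fin n → σ.symb)
    (qs : ∀ i : Fin n, Fin (σ.ar (Rs i)) → VTerm σ) : Struct σ where
  dom := BDom (⋃ i, Term.vsub (σ := σ) (.inr ⟨Rs i, qs i⟩))
  rel R := {vs |
    (∀ us ∈ ⋃ i, Term.esub (σ := σ) (.inr ⟨Rs i, qs i⟩) R, ∀ k : Fin (σ.ar R),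
        VTerm.pr R k us ∈ ⋃ i, Term.vsub (σ := σ) (.inr ⟨Rs i, qs i⟩) →
        andT _ us vs → bext _ (vs k) (.pr R k us) = true) ∧
    (∀ i : Fin n, ∀ h : Rs i = R,
        ¬ andT _ (fun j => qs i (Fin.cast (congrArg σ.ar h.symm) j)) vs)}

theorem IsHom.comp {A B C : Struct σ} {g : B.dom → C.dom} {f : A.dom → B.dom}
    (hg : IsHom B C g) (hf : IsHom A B f) : IsHom A C (g ∘ f) :=
  fun R x hx => hg R _ (hf R x hx)

theorem HomEx.trans {A B C : Struct σ} : HomEx A B → HomEx B C → HomEx A C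
  | ⟨f, hf⟩, ⟨g, hg⟩ => ⟨g ∘ f, hg.comp hf⟩

/-- The V-term `t` holds at the vertex `a` of `A`: the tree `T(t)` maps homomorphically to `A`
with its root sent to `a`. -/
def HoldsAt (A : Struct σ) (t : VTerm σ) (a : A.dom) : Prop :=
  ∃ f : t.tree.dom → A.dom, IsHom t.tree A f ∧ f t.root = a

section Trees

variable {A : Struct σ} {R : σ.symb} {ts : Fin (σ.ar R) → VTerm σ}

theorem isHom_edgeTree_iff {f : edgeDom R ts → A.dom} :
    IsHom (ETerm.tree R ts) A f ↔
      (∀ j, IsHom (ts j).tree A fun p => f ⟨j, p⟩) ∧ (fun j => f (edgeRoot R ts j)) ∈ A.rel R := by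
  constructor
  · intro hf
    exact ⟨fun j S y hy => hf S _ (Or.inl ⟨j, y, hy, rfl⟩), hf R _ (Or.inr ⟨rfl, rfl⟩)⟩
  · rintro ⟨hsub, hroot⟩ S _ (⟨j, y, hy, rfl⟩ | ⟨rfl, rfl⟩)
    · exact hsub j S y hy
    · exact hroot

theorem exists_isHom_edgeTree_iff {x : Fin (σ.ar R) → A.dom} :
    (∃ f, IsHom (ETerm.tree R ts) A f ∧ ∀ j, f (edgeRoot R ts j) = x j) ↔
      x ∈ A.rel R ∧ ∀ j, HoldsAt A (ts j) (x j) := by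
  constructor
  · rintro ⟨f, hf, hfx⟩
    obtain ⟨hsub, hroot⟩ := isHom_edgeTree_iff.1 hf
    exact ⟨funext hfx ▸ hroot, fun j => ⟨_, hsub j, hfx j⟩⟩
  · rintro ⟨hx, hts⟩
    choose g hg hgx using hts
    have hroot : (fun j => g j (ts j).root) ∈ A.rel R := funext hgx ▸ hx
    exact ⟨fun p => g p.1 p.2, isHom_edgeTree_iff.2 ⟨hg, hroot⟩, hgx⟩

theorem homEx_edgeTree_iff :
    HomEx (ETerm.tree R ts) A ↔ ∃ x ∈ A.rel R, ∀ j, HoldsAt A (ts j) (x j) := by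
  constructor
  · rintro ⟨f, hf⟩
    exact ⟨_, exists_isHom_edgeTree_iff.1 ⟨f, hf, fun _ => rfl⟩⟩
  · rintro ⟨x, hx⟩
    obtain ⟨f, hf, -⟩ := exists_isHom_edgeTree_iff.2 hx
    exact ⟨f, hf⟩

theorem holdsAt_vertex (A : Struct σ) (a : A.dom) : HoldsAt A .vertex a :=
  ⟨fun _ => a, fun _ _ hx => hx.elim, rfl⟩

-- The tree of `pr R k ts` is, by definition, that of `edge_R(ts)`, rerooted at coordinate `k`.
theorem holdsAt_pr_iff {k : Fin (σ.ar R)} {a : A.dom} :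
    HoldsAt A (.pr R k ts) a ↔
      ∃ x ∈ A.rel R, (∀ j, HoldsAt A (ts j) (x j)) ∧ x k = a := by
  constructor
  · rintro ⟨f, hf, rfl⟩
    obtain ⟨hx, hts⟩ := exists_isHom_edgeTree_iff.1 ⟨f, hf, fun _ => rfl⟩
    exact ⟨_, hx, hts, rfl⟩
  · rintro ⟨x, hx, hts, rfl⟩
    obtain ⟨f, hf, hfx⟩ := exists_isHom_edgeTree_iff.2 ⟨hx, hts⟩
    exact ⟨f, hf, hfx k⟩

end Trees

theorem VTerm.mem_vsub_self : ∀ t : VTerm σ, t ∈ t.vsub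
  | .vertex => rfl
  | .pr _ _ _ => Set.mem_insert _ _

theorem VTerm.mem_sub_of_pr_mem_vsub {t : VTerm σ} {R : σ.symb} {k : Fin (σ.ar R)}
    {us : Fin (σ.ar R) → VTerm σ} (h : .pr R k us ∈ t.vsub) :
    us ∈ t.esub R ∧ ∀ j, us j ∈ t.vsub := by
  induction t with
  | vertex => cases h
  | pr S i ts ih =>
    obtain h | h := h
    · cases h
      exact ⟨Or.inl ⟨rfl, rfl⟩, fun j => Or.inr (Set.mem_iUnion.2 ⟨j, (us j).mem_vsub_self⟩)⟩
    · obtain ⟨l, hl⟩ := Set.mem_iUnion.1 h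
      obtain ⟨hE, hV⟩ := ih l hl
      exact ⟨Or.inr ⟨l, hE⟩, fun j => Or.inr (Set.mem_iUnion.2 ⟨l, hV j⟩)⟩

open Classical in
/-- The characteristic tuple of `a`: its entry at `t` says whether `t` holds at `a`. -/
noncomputable def charTuple (A : Struct σ) (TV : Set (VTerm σ)) (a : A.dom) : BDom TV :=
  ⟨fun t => decide (HoldsAt A t.1 a), fun _ => decide_eq_true (holdsAt_vertex A a)⟩

theorem bext_charTuple {A : Struct σ} {TV : Set (VTerm σ)} {a : A.dom} {t : VTerm σ} :
    bext TV (charTuple A TV a) t = true ↔ t ∈ TV ∧ HoldsAt A t a := by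
  by_cases h : t ∈ TV <;> simp [bext, charTuple, h]

theorem bext_vertex {TV : Set (VTerm σ)} (h : .vertex ∈ TV) (v : BDom TV) :
    bext TV v .vertex = true := by
  rw [bext, dif_pos h]
  exact v.2 h

section Duality

variable {ι : Type*} (Rs : ι → σ.symb) (qs : ∀ i, Fin (σ.ar (Rs i)) → VTerm σ)

/-- The set `𝒯_V` of V-subterms of the terms `q_i = edge_{R_i}(qs i)`, for a family indexed by an
arbitrary type. -/
def familyVSub : Set (VTerm σ) :=
  ⋃ i, Term.vsub (σ := σ) (.inr ⟨Rs i, qs i⟩)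

/-- The set `𝒯_R` of R-subterms of the terms `q_i = edge_{R_i}(qs i)`, for a family indexed by an
arbitrary type. -/
def familyESub (R : σ.symb) : Set (Fin (σ.ar R) → VTerm σ) :=
  ⋃ i, Term.esub (σ := σ) (.inr ⟨Rs i, qs i⟩) R

/-- The dual of a family of terms `q_i = edge_{R_i}(qs i)` indexed by an arbitrary type; `DualN` is
the case of the index type `Fin n`, definitionally. -/
noncomputable def familyDual : Struct σ where
  dom := BDom (familyVSub Rs qs)
  rel R := {vs |
    (∀ us ∈ familyESub Rs qs R, ∀ k, .pr R k us ∈ familyVSub Rs qs →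
      andT _ us vs → bext _ (vs k) (.pr R k us) = true) ∧
    ∀ i, ∀ h : Rs i = R, ¬ andT _ (fun j => qs i (Fin.cast (congrArg σ.ar h.symm) j)) vs}

variable {Rs qs}

theorem arg_mem_familyVSub (i : ι) (j : Fin (σ.ar (Rs i))) : qs i j ∈ familyVSub Rs qs :=
  Set.mem_iUnion.2 ⟨i, Set.mem_iUnion.2 ⟨j, (qs i j).mem_vsub_self⟩⟩

theorem mem_familySub_of_pr_mem_familyVSub {R : σ.symb} {k : Fin (σ.ar R)}
    {us : Fin (σ.ar R) → VTerm σ} (h : .pr R k us ∈ familyVSub Rs qs) :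
    us ∈ familyESub Rs qs R ∧ ∀ j, us j ∈ familyVSub Rs qs := by
  obtain ⟨i, hi⟩ := Set.mem_iUnion.1 h
  obtain ⟨l, hl⟩ := Set.mem_iUnion.1 hi
  obtain ⟨hE, hV⟩ := VTerm.mem_sub_of_pr_mem_vsub hl
  exact ⟨Set.mem_iUnion.2 ⟨i, Or.inr ⟨l, hE⟩⟩,
    fun j => Set.mem_iUnion.2 ⟨i, Set.mem_iUnion.2 ⟨l, hV j⟩⟩⟩

theorem bext_eq_true_of_holdsAt {t : VTerm σ} (ht : t ∈ familyVSub Rs qs)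
    {v : BDom (familyVSub Rs qs)} (h : HoldsAt (familyDual Rs qs) t v) : bext _ v t = true := by
  induction t generalizing v with
  | vertex => exact bext_vertex ht v
  | pr R k ts ih =>
    obtain ⟨vs, hvs, hts, rfl⟩ := holdsAt_pr_iff.1 h
    obtain ⟨hE, hV⟩ := mem_familySub_of_pr_mem_familyVSub ht
    exact hvs.1 ts hE k ht fun j => ih j (hV j) (hts j)

theorem not_homEx_familyDual (i : ι) :
    ¬ HomEx (ETerm.tree (Rs i) (qs i)) (familyDual Rs qs) := by
  intro h
  obtain ⟨vs, hvs, hqs⟩ := homEx_edgeTree_iff.1 h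
  exact hvs.2 i rfl fun j => bext_eq_true_of_holdsAt (arg_mem_familyVSub i j) (hqs j)

theorem isHom_charTuple {A : Struct σ} (hA : ∀ i, ¬ HomEx (ETerm.tree (Rs i) (qs i)) A) :
    IsHom A (familyDual Rs qs) (charTuple A (familyVSub Rs qs)) := by
  intro R x hx
  have holdsAt_of_andT {us : Fin (σ.ar R) → VTerm σ}
      (hus : andT _ us fun j => charTuple A (familyVSub Rs qs) (x j)) (j : Fin (σ.ar R)) :
      HoldsAt A (us j) (x j) :=
    (bext_charTuple.1 (hus j)).2
  constructor
  · intro us _ k hk hus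
    exact bext_charTuple.2 ⟨hk, holdsAt_pr_iff.2 ⟨x, hx, holdsAt_of_andT hus, rfl⟩⟩
  · rintro i rfl hqs
    exact hA i (homEx_edgeTree_iff.2 ⟨x, hx, holdsAt_of_andT hqs⟩)

variable (Rs qs)

theorem multi_tree_duality_general (A : Struct σ) :
    Xor (∃ i, HomEx (ETerm.tree (Rs i) (qs i)) A) (HomEx A (familyDual Rs qs)) := by
  by_cases h : ∃ i, HomEx (ETerm.tree (Rs i) (qs i)) A
  · obtain ⟨i, hi⟩ := h
    exact Or.inl ⟨⟨i, hi⟩, fun hD => not_homEx_familyDual i (hi.trans hD)⟩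
  · exact Or.inr ⟨⟨_, isHom_charTuple (not_exists.1 h)⟩, h⟩

end Duality

/-- for every structure `A`, exactly one of the following holds: some `T(q_i)`
maps homomorphically to `A`, or `A` maps homomorphically to `D(q_1, …, q_n)`. -/
theorem multi_tree_duality {σ : Signature} (n : ℕ) (Rs : Fin n → σ.symb)
    (qs : ∀ i : Fin n, Fin (σ.ar (Rs i)) → VTerm σ) (A : Struct σ) :
    Xor' (∃ i : Fin n, HomEx (ETerm.tree (Rs i) (qs i)) A) (HomEx A (DualN n Rs qs)) :=
  multi_tree_duality_general Rs qs A
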